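/- arXiv:1603.01956 — 5 statements merged into one kernel-verified Lean document; each statement's English description precedes it below -/
import Mathlib

section
/- Let S be a nonempty compact subset of a Minkowski space and let x₀ be such that B(x₀, rad(S)) is a circumball of S, i.e., S ⊆ B(x₀, rad(S)). Then rad(S ∩ S(x₀, rad(S))) = rad(S); that is, the intersection of S with the boundary sphere of its circumball has the same circumradius as S. -/
open Metric Set

/-- The ball hull of `S`: intersection of all closed balls of radius 1 containing `S`. -/
def ballHull {E : Type*} [NormedAddCommGroup E] (S : Set E) : Set E :=
  ⋂ x ∈ {x : E | S ⊆ closedBall x 1}, closedBall x 1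

/-- The circumradius of `S`: the least `r ≥ 0` such that `S` is contained in some
closed ball of radius `r`. -/
noncomputable def circumradius {E : Type*} [NormedAddCommGroup E] (S : Set E) : ℝ :=
  sInf {r : ℝ | 0 ≤ r ∧ ∃ x : E, S ⊆ closedBall x r}

/-- A b-convex body: a bounded nonempty set equal to its ball hull. -/
def IsBConvexBody {E : Type*} [NormedAddCommGroup E] (K : Set E) : Prop :=
  Bornology.IsBounded K ∧ K.Nonempty ∧ ballHull K = K

/-- `F` is an exposed b-face of `K`: `F = K ∩ S(y,1)` for some supporting sphere `S(y,1)`. -/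
def IsExposedBFace {E : Type*} [NormedAddCommGroup E] (K F : Set E) : Prop :=
  ∃ y : E, K ⊆ closedBall y 1 ∧ (K ∩ sphere y 1).Nonempty ∧ F = K ∩ sphere y 1

/-- The set of b-exposed points of `K`. -/
def bExp {E : Type*} [NormedAddCommGroup E] (K : Set E) : Set E :=
  {x : E | ∃ y : E, K ⊆ closedBall y 1 ∧ K ∩ sphere y 1 = {x}}

/-!
Let `R = rad(S)`. If the part of `S` on the sphere `S(x₀, R)` had circumradius less than `R`, it
would lie in an open ball of radius `R` about some `x`. Move the centre `x₀` slightly towards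
`x`. Points of `S` in that open ball are at distance less than `R` from the new centre by
convexity, for every displacement up to `x`, and the other points of `S` were already at distance
less than `R` from `x₀`. By compactness a single small displacement works for all of `S`, and it
puts `S` in a closed ball of radius less than `R`.
-/

open Filter Topology

section Circumradius

variable {E : Type*} [NormedAddCommGroup E] {S T : Set E} {x : E} {r R : ℝ}

theorem circumradius_nonneg (S : Set E) : 0 ≤ circumradius S :=
  Real.sInf_nonneg fun _ hr => hr.1

theorem circumradius_le_of_subset_closedBall (hr : 0 ≤ r) (hS : S ⊆ closedBall x r) :
    circumradius S ≤ r :=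
  csInf_le ⟨0, fun _ hr => hr.1⟩ ⟨hr, x, hS⟩

theorem exists_subset_ball_of_circumradius_lt (hS : Bornology.IsBounded S)
    (hR : circumradius S < R) : ∃ x, S ⊆ ball x R := by
  obtain ⟨r₀, hr₀, hSr₀⟩ := hS.subset_closedBall_lt 0 0
  have hne : {r : ℝ | 0 ≤ r ∧ ∃ x, S ⊆ closedBall x r}.Nonempty := ⟨r₀, hr₀.le, 0, hSr₀⟩
  obtain ⟨r, ⟨-, x, hSr⟩, hrR⟩ := exists_lt_of_csInf_lt hne hR
  exact ⟨x, hSr.trans (closedBall_subset_ball hrR)⟩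

theorem circumradius_mono (hT : Bornology.IsBounded T) (hST : S ⊆ T) :
    circumradius S ≤ circumradius T := by
  refine le_of_forall_gt_imp_ge_of_dense fun r hr => ?_
  obtain ⟨x, hx⟩ := exists_subset_ball_of_circumradius_lt hT hr
  exact circumradius_le_of_subset_closedBall ((circumradius_nonneg T).trans hr.le)
    (hST.trans (hx.trans ball_subset_closedBall))

theorem circumradius_lt_of_subset_ball (hS : IsCompact S) (hR : 0 < R) (hSR : S ⊆ ball x R) :
    circumradius S < R := by
  have hnear : ∀ᶠ r in 𝓝 R, ∀ y ∈ S, dist y x < r :=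
    hS.eventually_forall_of_forall_eventually fun y hy =>
      (by fun_prop : Continuous fun p : ℝ × E => dist p.2 x).continuousAt.eventually_lt
        continuous_fst.continuousAt (hSR hy)
  obtain ⟨r, hSr, hr, hrR⟩ :=
    ((hnear.filter_mono nhdsWithin_le_nhds).and (Ioo_mem_nhdsLT hR)).exists
  exact (circumradius_le_of_subset_closedBall hr.le fun y hy => (hSr y hy).le).trans_lt hrR

end Circumradius

section MovingTheCenter

variable {E : Type*} [NormedAddCommGroup E] [NormedSpace ℝ E] {S : Set E} {x₀ x y : E} {R t : ℝ}

theorem mem_ball_lineMap (hx₀ : y ∈ closedBall x₀ R) (hx : y ∈ ball x R) (ht : t ∈ Ioc 0 1) :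
    y ∈ ball (AffineMap.lineMap x₀ x t) R := by
  have hR : R ≠ 0 := (pos_of_mem_ball hx).ne'
  rw [mem_closedBall_comm, ← closure_ball y hR] at hx₀
  rw [mem_ball_comm, ← isOpen_ball.interior_eq] at hx ⊢
  rw [AffineMap.lineMap_apply_module', add_comm]
  exact (convex_ball y R).add_smul_sub_mem_interior' hx₀ hx ht

theorem eventually_subset_ball_lineMap (hS : IsCompact S) (hx₀ : S ⊆ closedBall x₀ R)
    (hx : S ∩ sphere x₀ R ⊆ ball x R) :
    ∀ᶠ t in 𝓝[>] (0 : ℝ), S ⊆ ball (AffineMap.lineMap x₀ x t) R := by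
  suffices ∀ᶠ t in 𝓝 (0 : ℝ), ∀ y ∈ S, t ∈ Ioc 0 1 → y ∈ S →
      y ∈ ball (AffineMap.lineMap x₀ x t) R by
    filter_upwards [this.filter_mono nhdsWithin_le_nhds, Ioc_mem_nhdsGT one_pos] with t hSt ht y hy
    exact hSt y hy ht hy
  refine hS.eventually_forall_of_forall_eventually fun y hy => ?_
  rcases (mem_closedBall.1 (hx₀ hy)).lt_or_eq with hlt | heq
  · have hcont : Continuous fun p : ℝ × E => dist p.2 (AffineMap.lineMap x₀ x p.1) := by
      simp only [AffineMap.lineMap_apply_module']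
      fun_prop
    filter_upwards [hcont.continuousAt.eventually_lt_const (by simpa using hlt)] with p hp _ _
    exact hp
  · have hnear : ∀ᶠ p : ℝ × E in 𝓝 (0, y), p.2 ∈ ball x R :=
      continuous_snd.continuousAt.eventually_mem (isOpen_ball.mem_nhds (hx ⟨hy, heq⟩))
    filter_upwards [hnear] with p hp ht hpS
    exact mem_ball_lineMap (hx₀ hpS) hp ht

end MovingTheCenter

theorem stmt_1_general {E : Type*} [NormedAddCommGroup E] [NormedSpace ℝ E]
    (S : Set E) (hc : IsCompact S) (x₀ : E) (hx₀ : S ⊆ closedBall x₀ (circumradius S)) :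
    circumradius (S ∩ sphere x₀ (circumradius S)) = circumradius S := by
  refine (circumradius_mono hc.isBounded inter_subset_left).antisymm (le_of_not_gt fun hlt => ?_)
  obtain ⟨x, hx⟩ :=
    exists_subset_ball_of_circumradius_lt (hc.isBounded.subset inter_subset_left) hlt
  obtain ⟨t, ht⟩ := (eventually_subset_ball_lineMap hc hx₀ hx).exists
  exact (circumradius_lt_of_subset_ball hc ((circumradius_nonneg _).trans_lt hlt) ht).false

theorem stmt_1 {E : Type*} [NormedAddCommGroup E] [NormedSpace ℝ E]
    [FiniteDimensional ℝ E] [Nontrivial E]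
    (S : Set E) (hS : S.Nonempty) (hc : IsCompact S)
    (x₀ : E) (hx₀ : S ⊆ closedBall x₀ (circumradius S)) :
    circumradius (S ∩ sphere x₀ (circumradius S)) = circumradius S :=
  stmt_1_general S hc x₀ hx₀
end

section
/- Let K be a b-bounded b-convex body in a Minkowski space. Then for every point x₀ ∉ K there exists y₀ such that K ⊆ int(B(y₀,1)) and x₀ ∉ B(y₀,1). In particular, K ⊆ B(y₀,r) for some r ∈ (0,1). -/
open Metric Set

/-!
Since `K` is its own ball hull, some unit ball around a centre `y` contains `K` but not `x₀`; since
the circumradius of `K` is less than `1`, some ball of radius `s < 1` around a centre `z` contains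
`K` as well. By convexity of the norm, moving the centre from `y` a proportion `t` of the way
towards `z` gives a ball of radius `(1 - t) + t * s < 1` that still contains `K`, while for small
`t > 0` the unit ball around the new centre still misses `x₀`.
-/

section BallHull

variable {E : Type*} [NormedAddCommGroup E] {S : Set E} {x : E}

theorem notMem_ballHull_iff :
    x ∉ ballHull S ↔ ∃ y, S ⊆ closedBall y 1 ∧ x ∉ closedBall y 1 := by
  simp only [ballHull, mem_ofPred_eq, mem_iInter, not_forall, exists_prop]

theorem exists_subset_closedBall_of_circumradius_lt {r : ℝ} (hS : Bornology.IsBounded S)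
    (hr : circumradius S < r) : ∃ s ∈ Ico 0 r, ∃ z, S ⊆ closedBall z s := by
  obtain ⟨R, hR, hSR⟩ := hS.subset_closedBall_lt 0 0
  have hadmissible : R ∈ {s : ℝ | 0 ≤ s ∧ ∃ z, S ⊆ closedBall z s} := ⟨hR.le, 0, hSR⟩
  obtain ⟨s, ⟨hs, hSs⟩, hsr⟩ := exists_lt_of_csInf_lt ⟨R, hadmissible⟩ hr
  exact ⟨s, ⟨hs, hsr⟩, hSs⟩

end BallHull

section MovingCentre

variable {E : Type*} [SeminormedAddCommGroup E] [NormedSpace ℝ E] {x y z : E} {r s : ℝ}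

theorem dist_lineMap_le_lineMap_dist {t : ℝ} (ht : t ∈ Icc (0 : ℝ) 1) :
    dist x (AffineMap.lineMap y z t) ≤ AffineMap.lineMap (dist x y) (dist x z) t := by
  simpa only [dist_comm x, AffineMap.lineMap_apply_module] using
    (convexOn_univ_dist x).2 (mem_univ y) (mem_univ z) (sub_nonneg.2 ht.2) ht.1
      (sub_add_cancel 1 t)

theorem closedBall_inter_closedBall_subset_closedBall_lineMap {t : ℝ} (ht : t ∈ Icc (0 : ℝ) 1) :
    closedBall y r ∩ closedBall z s ⊆
      closedBall (AffineMap.lineMap y z t) (AffineMap.lineMap r s t) :=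
  fun _ hx ↦ (dist_lineMap_le_lineMap_dist ht).trans <|
    lineMap_mono_endpoints hx.1 hx.2 ht.1 ht.2

theorem exists_mem_Ioo_notMem_closedBall_lineMap (z : E) (hx : x ∉ closedBall y r) :
    ∃ t ∈ Ioo (0 : ℝ) 1, x ∉ closedBall (AffineMap.lineMap y z t) r := by
  have hcont : Continuous fun t : ℝ ↦ dist x (AffineMap.lineMap y z t) :=
    continuous_const.dist AffineMap.lineMap_continuous
  have hzero : r < dist x (AffineMap.lineMap y z (0 : ℝ)) := by
    simpa only [AffineMap.lineMap_apply_zero, mem_closedBall, not_le] using hx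
  have hnear : ∀ᶠ t in nhdsWithin (0 : ℝ) (Ioi 0), r < dist x (AffineMap.lineMap y z t) :=
    (hcont.continuousAt.eventually_const_lt hzero).filter_mono nhdsWithin_le_nhds
  obtain ⟨t, hxt, ht⟩ := (hnear.and (Ioo_mem_nhdsGT one_pos)).exists
  exact ⟨t, ht, not_le.2 hxt⟩

theorem exists_smaller_closedBall_of_notMem {S : Set E} (hSy : S ⊆ closedBall y r)
    (hSz : S ⊆ closedBall z s) (hsr : s < r) (hx : x ∉ closedBall y r) :
    ∃ c, x ∉ closedBall c r ∧ ∃ ρ ∈ Ioo s r, S ⊆ closedBall c ρ := by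
  obtain ⟨t, ht, hxt⟩ := exists_mem_Ioo_notMem_closedBall_lineMap z hx
  have hρ : AffineMap.lineMap r s t ∈ Ioo s r :=
    ⟨(right_lt_lineMap_iff_lt ht.2).2 hsr, (lineMap_lt_left_iff_lt ht.1).2 hsr⟩
  exact ⟨AffineMap.lineMap y z t, hxt, AffineMap.lineMap r s t, hρ,
    (subset_inter hSy hSz).trans
      (closedBall_inter_closedBall_subset_closedBall_lineMap (Ioo_subset_Icc_self ht))⟩

end MovingCentre

theorem stmt_4_general {E : Type*} [NormedAddCommGroup E] [NormedSpace ℝ E]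
    {S : Set E} (hS : circumradius S < 1) {x : E} (hx : x ∉ ballHull S) :
    ∃ y : E, S ⊆ interior (closedBall y 1) ∧ x ∉ closedBall y 1 ∧
      ∃ r ∈ Ioo (0 : ℝ) 1, S ⊆ closedBall y r := by
  obtain ⟨y, hSy, hxy⟩ := notMem_ballHull_iff.1 hx
  obtain ⟨s, hs, z, hSz⟩ :=
    exists_subset_closedBall_of_circumradius_lt (isBounded_closedBall.subset hSy) hS
  obtain ⟨c, hxc, r, hr, hSc⟩ := exists_smaller_closedBall_of_notMem hSy hSz hs.2 hxy
  have hinterior : S ⊆ interior (closedBall c 1) :=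
    hSc.trans <| (closedBall_subset_ball hr.2).trans ball_subset_interior_closedBall
  exact ⟨c, hinterior, hxc, r, Ioo_subset_Ioo_left hs.1 hr, hSc⟩

theorem stmt_4 {E : Type*} [NormedAddCommGroup E] [NormedSpace ℝ E]
    [FiniteDimensional ℝ E] [Nontrivial E]
    (K : Set E) (hK : IsBConvexBody K) (hbb : circumradius K < 1)
    (x₀ : E) (hx₀ : x₀ ∉ K) :
    ∃ y₀ : E, K ⊆ interior (closedBall y₀ 1) ∧ x₀ ∉ closedBall y₀ 1 ∧
      ∃ r ∈ Set.Ioo (0 : ℝ) 1, K ⊆ closedBall y₀ r :=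
  stmt_4_general hbb (hK.2.2.symm ▸ hx₀)
end

section
/- Every b-convex body K in a Minkowski space satisfies bd(K) = ⋃ {F : F is an exposed b-face of K}, i.e., the boundary of K is the union of its exposed b-faces. -/
open Metric Set

/-!
The ball hull is an iterated intersection of balls: `K = ⋂ y ∈ C, B(y,1)`, where
`C = ⋂ k ∈ K, B(k,1)` is the set of centers of the unit balls containing `K`. As `C` is compact, the
intersection of the open unit balls centered in `C` is open. The interior of each closed ball is the
open ball, so this open set is the interior of `K`. The rest of `K`, namely the points at distance
exactly one from some `y ∈ C`, is its frontier.
-/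

section BallIntersection

variable {X : Type*} [PseudoMetricSpace X] {r : ℝ} {S : Set X} {x y : X}

/-- The ball intersection `bi(S,r)`: the intersection of all closed balls of radius `r` centered
in `S`. Equivalently, the set of centers of the closed balls of radius `r` containing `S`. -/
def ballIntersection (r : ℝ) (S : Set X) : Set X :=
  ⋂ x ∈ S, closedBall x r

theorem mem_ballIntersection_iff_subset_closedBall :
    y ∈ ballIntersection r S ↔ S ⊆ closedBall y r := by
  simp only [ballIntersection, mem_iInter₂, subset_def, mem_closedBall_comm]

theorem ballIntersection_subset_closedBall (hx : x ∈ S) : ballIntersection r S ⊆ closedBall x r :=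
  biInter_subset_of_mem hx

theorem isClosed_ballIntersection : IsClosed (ballIntersection r S) :=
  isClosed_biInter fun _ _ ↦ isClosed_closedBall

theorem isCompact_ballIntersection [ProperSpace X] (hS : S.Nonempty) :
    IsCompact (ballIntersection r S) :=
  let ⟨x, hx⟩ := hS
  (isCompact_closedBall x r).of_isClosed_subset isClosed_ballIntersection
    (ballIntersection_subset_closedBall hx)

theorem isOpen_biInter_ball_of_isCompact (hS : IsCompact S) : IsOpen (⋂ x ∈ S, ball x r) := by
  refine isOpen_iff_eventually.2 fun z hz ↦ ?_
  simp only [mem_iInter₂, mem_ball] at hz ⊢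
  exact hS.eventually_forall_of_forall_eventually fun x hx ↦
    continuous_dist.continuousAt.eventually_lt_const (hz x hx)

end BallIntersection

section Frontier

variable {V : Type*} [SeminormedAddCommGroup V] [NormedSpace ℝ V] {r : ℝ} {S : Set V}

theorem interior_ballIntersection_of_isCompact (hr : r ≠ 0) (hS : IsCompact S) :
    interior (ballIntersection r S) = ⋂ x ∈ S, ball x r := by
  apply Subset.antisymm
  · refine subset_iInter₂ fun x hx ↦ ?_
    rw [← interior_closedBall x hr]
    exact interior_mono (ballIntersection_subset_closedBall hx)
  · exact interior_maximal (iInter₂_mono fun _ _ ↦ ball_subset_closedBall)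
      (isOpen_biInter_ball_of_isCompact hS)

theorem frontier_ballIntersection_of_isCompact (hr : r ≠ 0) (hS : IsCompact S) :
    frontier (ballIntersection r S) = ⋃ x ∈ S, ballIntersection r S ∩ sphere x r := by
  rw [isClosed_ballIntersection.frontier_eq, interior_ballIntersection_of_isCompact hr hS]
  simp only [sdiff_iInter]
  refine iUnion₂_congr fun x hx ↦ ?_
  rw [← closedBall_sdiff_ball, ← inter_sdiff_assoc,
    inter_eq_left.2 (ballIntersection_subset_closedBall hx)]

end Frontier

section BallHull

variable {E : Type*} [NormedAddCommGroup E]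

theorem ballHull_eq_ballIntersection_ballIntersection (S : Set E) :
    ballHull S = ballIntersection 1 (ballIntersection 1 S) := by
  have hcenters : {x : E | S ⊆ closedBall x 1} = ballIntersection 1 S :=
    ext fun _ ↦ mem_ballIntersection_iff_subset_closedBall.symm
  rw [ballHull, hcenters, ← ballIntersection]

theorem sUnion_isExposedBFace (K : Set E) :
    ⋃₀ {F | IsExposedBFace K F} = ⋃ y ∈ ballIntersection 1 K, K ∩ sphere y 1 := by
  ext x
  simp only [mem_sUnion, mem_ofPred_eq, mem_iUnion₂, mem_ballIntersection_iff_subset_closedBall,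
    exists_prop]
  constructor
  · rintro ⟨_, ⟨y, hKy, -, rfl⟩, hx⟩
    exact ⟨y, hKy, hx⟩
  · rintro ⟨y, hKy, hx⟩
    exact ⟨K ∩ sphere y 1, ⟨y, hKy, ⟨x, hx⟩, rfl⟩, hx⟩

end BallHull

theorem stmt_5 {E : Type*} [NormedAddCommGroup E] [NormedSpace ℝ E]
    [FiniteDimensional ℝ E] [Nontrivial E]
    (K : Set E) (hK : IsBConvexBody K) :
    frontier K = ⋃₀ {F : Set E | IsExposedBFace K F} := by
  obtain ⟨-, hne, hhull⟩ := hK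
  rw [ballHull_eq_ballIntersection_ballIntersection] at hhull
  have hcenters : IsCompact (ballIntersection 1 K) := isCompact_ballIntersection hne
  calc
    frontier K = frontier (ballIntersection 1 (ballIntersection 1 K)) := by rw [hhull]
    _ = ⋃ y ∈ ballIntersection 1 K, ballIntersection 1 (ballIntersection 1 K) ∩ sphere y 1 :=
      frontier_ballIntersection_of_isCompact one_ne_zero hcenters
    _ = ⋃ y ∈ ballIntersection 1 K, K ∩ sphere y 1 := by rw [hhull]
    _ = ⋃₀ {F : Set E | IsExposedBFace K F} := (sUnion_isExposedBFace K).symm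
end

section
/- Let S be a nonempty b-bounded subset of a Minkowski space. Then bh₁(S) = ⋂ {B(x,1) : S ⊆ int(B(x,1))} = ⋂ {B(x,1) : S ⊆ B(x,r) for some r < 1} = ⋂ {B(x,r) : r < 1 and S ⊆ B(x,r)}. -/
open Metric Set

/-!
Let `C r` be the set of centres of balls of radius `r` containing `S`. A point `p` lies in every
unit ball centred in a set `A` exactly when `A ⊆ B(p, 1)`, so such an intersection does not change
when `A` is replaced by its closure. If `S ⊆ B(c, ρ)` with `ρ < 1`, moving a centre `x ∈ C 1`
slightly towards `c` puts it in some `C r` with `r < 1`; hence `⋃ r < 1, C r` is dense in `C 1`, and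
the unit balls centred there already cut out the ball hull. The smaller balls `B(x, r)` cut out
nothing more, because `B(x, r)` is the intersection of the unit balls containing it.
-/

lemma biInter_closure_closedBall {X : Type*} [PseudoMetricSpace X] (A : Set X) (r : ℝ) :
    ⋂ x ∈ closure A, closedBall x r = ⋂ x ∈ A, closedBall x r := by
  have mem_iff (B : Set X) (p : X) : p ∈ ⋂ x ∈ B, closedBall x r ↔ B ⊆ closedBall p r := by
    simp only [mem_iInter₂, subset_def, mem_closedBall_comm]
  ext p
  rw [mem_iff, mem_iff, isClosed_closedBall.closure_subset_iff]

section SeminormedSpace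

variable {V : Type*} [SeminormedAddCommGroup V] [NormedSpace ℝ V] {S : Set V} {x : V} {r R : ℝ}

lemma exists_dist_eq_and_dist_eq_add {p : V} (hpx : 0 < dist p x) {δ : ℝ} (hδ : 0 ≤ δ) :
    ∃ y, dist x y = δ ∧ dist p y = dist p x + δ := by
  refine ⟨AffineMap.lineMap p x (1 + δ / dist p x), ?_, ?_⟩
  · rw [dist_right_lineMap, sub_add_cancel_left, norm_neg, Real.norm_of_nonneg (by positivity),
      div_mul_cancel₀ _ hpx.ne']
  · rw [dist_left_lineMap, Real.norm_of_nonneg (by positivity), add_mul, one_mul,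
      div_mul_cancel₀ _ hpx.ne']

lemma subset_closedBall_smul_add_smul {y : V} {a b : ℝ} (hx : S ⊆ closedBall x r)
    (hy : S ⊆ closedBall y R) (ha : 0 ≤ a) (hb : 0 ≤ b) (hab : a + b = 1) :
    S ⊆ closedBall (a • x + b • y) (a * r + b * R) := by
  intro s hs
  rw [mem_closedBall_comm, mem_closedBall]
  calc dist (a • x + b • y) s ≤ a * dist x s + b * dist y s :=
        (convexOn_univ_dist s).2 (mem_univ x) (mem_univ y) ha hb hab
    _ ≤ a * r + b * R := by
        gcongr
        · exact mem_closedBall'.1 (hx hs)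
        · exact mem_closedBall'.1 (hy hs)

end SeminormedSpace

section BallHull

variable {E : Type*} [NormedAddCommGroup E] {S T : Set E} {x : E} {r R : ℝ}

lemma subset_ballHull : S ⊆ ballHull S :=
  subset_iInter₂ fun _ hx ↦ hx

lemma ballHull_mono (hST : S ⊆ T) : ballHull S ⊆ ballHull T :=
  biInter_subset_biInter_left fun _ hx ↦ hST.trans hx

lemma exists_subset_closedBall_of_circumradius_lt_s6 (hS : Bornology.IsBounded S)
    (hR : circumradius S < R) : ∃ c, ∃ r < R, S ⊆ closedBall c r := by
  obtain ⟨ρ, hρ, hSρ⟩ := hS.subset_closedBall_lt 0 (0 : E)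
  obtain ⟨r, ⟨_, c, hSr⟩, hr⟩ :=
    exists_lt_of_csInf_lt (s := {r | 0 ≤ r ∧ ∃ c, S ⊆ closedBall c r}) ⟨ρ, hρ.le, 0, hSρ⟩ hR
  exact ⟨c, r, hr, hSr⟩

variable [NormedSpace ℝ E]

lemma ballHull_closedBall (hr₀ : 0 ≤ r) (hr₁ : r ≤ 1) :
    ballHull (closedBall x r) = closedBall x r := by
  refine Subset.antisymm (fun p hp ↦ ?_) subset_ballHull
  by_contra hpr
  rw [mem_closedBall, not_le] at hpr
  obtain ⟨y, hxy, hpy⟩ :=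
    exists_dist_eq_and_dist_eq_add (hr₀.trans_lt hpr) (sub_nonneg.2 hr₁)
  have hy : closedBall x r ⊆ closedBall y 1 := closedBall_subset_closedBall' (by linarith)
  have : dist p y ≤ 1 := mem_iInter₂.1 hp y hy
  linarith

lemma ballHull_subset_closedBall (hS : S.Nonempty) (hr : r ≤ 1) (hSr : S ⊆ closedBall x r) :
    ballHull S ⊆ closedBall x r :=
  (ballHull_mono hSr).trans
    (ballHull_closedBall (nonempty_closedBall.1 (hS.mono hSr)) hr).subset

lemma setOf_subset_closedBall_subset_closure (hR : circumradius S < R) :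
    {x | S ⊆ closedBall x R} ⊆ closure {x | ∃ r < R, S ⊆ closedBall x r} := by
  intro x hx
  obtain ⟨c, ρ, hρ, hc⟩ :=
    exists_subset_closedBall_of_circumradius_lt_s6 (isBounded_closedBall.subset hx) hR
  have hseg : openSegment ℝ x c ⊆ {y | ∃ r < R, S ⊆ closedBall y r} := by
    rintro _ ⟨a, b, ha, hb, hab, rfl⟩
    have hlt : a * R + b * ρ < R := by
      calc a * R + b * ρ < a * R + b * R := by gcongr
        _ = R := by rw [← add_mul, hab, one_mul]
    exact ⟨_, hlt, subset_closedBall_smul_add_smul hx hc ha.le hb.le hab⟩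
  exact closure_mono hseg (segment_subset_closure_openSegment (left_mem_segment ℝ x c))

lemma biInter_closedBall_subset_ballHull (hS : circumradius S < 1) :
    ⋂ x ∈ {x | ∃ r < (1 : ℝ), S ⊆ closedBall x r}, closedBall x 1 ⊆ ballHull S := by
  rw [← biInter_closure_closedBall]
  exact biInter_subset_biInter_left (setOf_subset_closedBall_subset_closure hS)

theorem stmt_6_general (S : Set E) (hS : S.Nonempty) (hbb : circumradius S < 1) :
    (ballHull S = ⋂ x ∈ {x : E | S ⊆ interior (closedBall x 1)}, closedBall x 1) ∧
    (ballHull S = ⋂ x ∈ {x : E | ∃ r < (1 : ℝ), S ⊆ closedBall x r}, closedBall x 1) ∧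
    (ballHull S =
      ⋂ p ∈ {p : E × ℝ | p.2 < 1 ∧ S ⊆ closedBall p.1 p.2}, closedBall p.1 p.2) := by
  have hsub := biInter_closedBall_subset_ballHull hbb
  refine ⟨Subset.antisymm ?_ (Subset.trans ?_ hsub), Subset.antisymm ?_ hsub,
    Subset.antisymm ?_ (Subset.trans ?_ hsub)⟩
  · exact biInter_subset_biInter_left fun x hx ↦ hx.trans interior_subset
  · exact biInter_subset_biInter_left fun x ⟨r, hr, hx⟩ ↦
      hx.trans ((closedBall_subset_ball hr).trans ball_subset_interior_closedBall)
  · exact biInter_subset_biInter_left fun x ⟨r, hr, hx⟩ ↦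
      hx.trans (closedBall_subset_closedBall hr.le)
  · exact subset_iInter₂ fun p hp ↦ ballHull_subset_closedBall hS hp.1.le hp.2
  · exact subset_iInter₂ fun x ⟨r, hr, hx⟩ ↦
      iInter₂_subset_of_subset (x, r) ⟨hr, hx⟩ (closedBall_subset_closedBall hr.le)

end BallHull

theorem stmt_6 {E : Type*} [NormedAddCommGroup E] [NormedSpace ℝ E]
    [FiniteDimensional ℝ E] [Nontrivial E]
    (S : Set E) (hS : S.Nonempty) (hbb : circumradius S < 1) :
    (ballHull S = ⋂ x ∈ {x : E | S ⊆ interior (closedBall x 1)}, closedBall x 1) ∧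
    (ballHull S = ⋂ x ∈ {x : E | ∃ r < (1 : ℝ), S ⊆ closedBall x r}, closedBall x 1) ∧
    (ballHull S =
      ⋂ p ∈ {p : E × ℝ | p.2 < 1 ∧ S ⊆ closedBall p.1 p.2}, closedBall p.1 p.2) :=
  stmt_6_general S hS hbb
end

section
/- A Minkowski space has strictly convex norm if and only if for every r > 0 and any two distinct points x₁, x₂, the circumradius of B(x₁,r) ∩ B(x₂,r) is strictly smaller than r (with the convention rad(∅) = 0). -/
open Metric Set

/-!
If the norm is strictly convex, a point within `r` of both `x₁ ≠ x₂` is at distance less than `r`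
from their midpoint; compactness turns this into a uniform bound below `r`. Conversely, if strict
convexity fails, there are distinct unit vectors `x, y` with `‖x + y‖ = 2`. The balls of radius
`1` around `x` and `y` then both contain `0` and `x + y`, two points at distance `2`, so their
intersection fits in no ball of radius less than `1`.
-/

section CircumradiusBounds

variable {E : Type*} [NormedAddCommGroup E]

theorem circumradius_le {S : Set E} {c : E} {r : ℝ} (hr : 0 ≤ r) (hS : S ⊆ closedBall c r) :
    circumradius S ≤ r :=
  csInf_le ⟨0, fun _ h => h.1⟩ ⟨hr, c, hS⟩

theorem circumradius_lt_of_subset_ball_s8 [ProperSpace E] {S : Set E} {c : E} {r : ℝ} (hr : 0 < r)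
    (hS : IsClosed S) (hSc : S ⊆ ball c r) : circumradius S < r := by
  obtain ⟨r', hr', hSr'⟩ := exists_pos_lt_subset_ball hr hS hSc
  exact (circumradius_le hr'.1.le (hSr'.trans ball_subset_closedBall)).trans_lt hr'.2

-- An unbounded `S` has `circumradius S = sInf ∅ = 0`.
theorem dist_le_two_mul_circumradius {S : Set E} (hS : Bornology.IsBounded S) {x y : E}
    (hx : x ∈ S) (hy : y ∈ S) : dist x y ≤ 2 * circumradius S := by
  obtain ⟨R, hR, hSR⟩ := hS.subset_closedBall_lt 0 0
  suffices dist x y / 2 ≤ circumradius S by linarith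
  refine le_csInf ⟨R, hR.le, 0, hSR⟩ ?_
  rintro r ⟨-, c, hSr⟩
  linarith [dist_triangle_right x y c, mem_closedBall.1 (hSr hx), mem_closedBall.1 (hSr hy)]

theorem norm_add_le_two_mul_circumradius_closedBall_inter_closedBall {x y : E} {r : ℝ}
    (hx : ‖x‖ ≤ r) (hy : ‖y‖ ≤ r) :
    ‖x + y‖ ≤ 2 * circumradius (closedBall x r ∩ closedBall y r) := by
  have h_zero : (0 : E) ∈ closedBall x r ∩ closedBall y r := by simp [hx, hy]
  have h_add : x + y ∈ closedBall x r ∩ closedBall y r := by simp [hx, hy]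
  simpa only [dist_zero_right] using
    dist_le_two_mul_circumradius (isBounded_closedBall.subset inter_subset_left) h_add h_zero

end CircumradiusBounds

section StrictConvexity

variable {E : Type*} [NormedAddCommGroup E] [NormedSpace ℝ E]

theorem closedBall_inter_closedBall_subset_ball_midpoint [StrictConvexSpace ℝ E] {x y : E}
    (hxy : x ≠ y) (r : ℝ) :
    closedBall x r ∩ closedBall y r ⊆ ball (midpoint ℝ x y) r := by
  rintro z ⟨hzx, hzy⟩
  rw [mem_ball']
  exact ((sbtw_midpoint_of_ne ℝ hxy).dist_lt_max_dist z).trans_le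
    (max_le (mem_closedBall'.1 hzx) (mem_closedBall'.1 hzy))

theorem circumradius_closedBall_inter_closedBall_lt [ProperSpace E] [StrictConvexSpace ℝ E]
    {r : ℝ} (hr : 0 < r) {x y : E} (hxy : x ≠ y) :
    circumradius (closedBall x r ∩ closedBall y r) < r :=
  circumradius_lt_of_subset_ball_s8 hr (isClosed_closedBall.inter isClosed_closedBall)
    (closedBall_inter_closedBall_subset_ball_midpoint hxy r)

theorem strictConvexSpace_of_circumradius_closedBall_inter_closedBall_lt {r : ℝ} (hr : 0 < r)
    (h : ∀ x y : E, x ≠ y → circumradius (closedBall x r ∩ closedBall y r) < r) :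
    StrictConvexSpace ℝ E := by
  refine StrictConvexSpace.of_norm_add_ne_two fun x y hx hy hxy hsum => ?_
  have norm_smul_of_unit {z : E} (hz : ‖z‖ = 1) : ‖r • z‖ = r := by
    rw [norm_smul_of_nonneg hr.le, hz, mul_one]
  have hlt := h (r • x) (r • y) ((smul_right_injective E hr.ne').ne hxy)
  have hle := norm_add_le_two_mul_circumradius_closedBall_inter_closedBall
    (norm_smul_of_unit hx).le (norm_smul_of_unit hy).le
  rw [← smul_add, norm_smul_of_nonneg hr.le, hsum] at hle
  linarith

end StrictConvexity

theorem stmt_8 {E : Type*} [NormedAddCommGroup E] [NormedSpace ℝ E]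
    [FiniteDimensional ℝ E] [Nontrivial E] :
    StrictConvexSpace ℝ E ↔
      ∀ r : ℝ, 0 < r → ∀ x₁ x₂ : E, x₁ ≠ x₂ →
        circumradius (closedBall x₁ r ∩ closedBall x₂ r) < r := by
  constructor
  · intro _ r hr x₁ x₂ hne
    have := FiniteDimensional.proper ℝ E
    exact circumradius_closedBall_inter_closedBall_lt hr hne
  · intro h
    exact strictConvexSpace_of_circumradius_closedBall_inter_closedBall_lt one_pos (h 1 one_pos)
end
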